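/- arXiv:2005.02604 — 2 statements merged into one kernel-verified Lean document; each statement's English description precedes it below -/
import Mathlib

section
/- Let h be a symmetric bilinear form on V with associated symmetric endomorphism H, and let T be a (0,k)-tensor on V. Then for all X_1,…,X_k ∈ V: Σ_{i=1}^k Σ_{a=1}^n ((H(X_i) ∧ e_a)T)(X_1,…,e_a,…,X_k) = Σ_{i≠j} (T∘τ_{ij})(X_1,…,H(X_i),…,X_k) − Σ_{i≠j} h(X_i,X_j)·c_{ij}(g⊗T)(X_1,…,X̂_i,…,X̂_j,…,X_k) − (n−1)·(HT)(X_1,…,X_k), where on the left e_a occupies the i-th slot, (A ∧ B) denotes the skew endomorphism (A ∧ B)Z = g(A,Z)B − g(B,Z)A, and in (T∘τ_{ij}) the argument H(X_i) occupies the i-th slot (and the l-th slot holds X_l for l ≠ i). -/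
/-!
Expand the action on the left slot by slot: for fixed `i`, let `j` be the slot on which
`H(Xᵢ) ∧ e_a` acts.

* If `j = i`, the operator is applied to `e_a` itself and gives
  `g(H(Xᵢ), e_a) e_a − H(Xᵢ)`; summing over `a` produces `(1 - n) H(Xᵢ)` in slot `i`, hence the
  multiple `(n - 1)` of the action of `H`.
* If `j ≠ i`, it gives `h(Xᵢ, Xⱼ) e_a − g(e_a, Xⱼ) H(Xᵢ)` in slot `j`, with `e_a` in slot `i`.
  The first part sums to the `g`-contraction of slots `i, j`, the second to `T` with `Xⱼ` in slot
  `i` and `H(Xᵢ)` in slot `j`.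

Both cases rest on the basis expansion `sum_inner_mul_update`.
-/

open scoped RealInnerProductSpace BigOperators
open Finset

noncomputable section

variable {V : Type*} [NormedAddCommGroup V] [InnerProductSpace ℝ V]

/-- The action `(L T)(X₁,…,X_k) = −Σᵢ T(X₁,…,L(Xᵢ),…,X_k)` of a map `L : V → V`
on a `(0,k)`-tensor `T`. -/
def tact {k : ℕ} (L : V → V) (T : (Fin k → V) → ℝ) (X : Fin k → V) : ℝ :=
  -∑ i, T (Function.update X i (L (X i)))

/-- The Kulkarni–Nomizu product of two bilinear forms. -/
def knProd (s₁ s₂ : V → V → ℝ) (X Y Z W : V) : ℝ :=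
  s₁ X Z * s₂ Y W - s₁ X W * s₂ Y Z + s₁ Y W * s₂ X Z - s₁ Y Z * s₂ X W

/-- The inner product `g` as a bilinear form. -/
def gf (X Y : V) : ℝ := ⟪X, Y⟫

/-- The curvature endomorphism `R(X,Y)`, determined by `g(R(X,Y)Z,W) = R(X,Y,Z,W)`,
expressed via the orthonormal basis `e`. -/
def curvOp {n : ℕ} (e : Fin n → V) (R : V → V → V → V → ℝ) (X Y Z : V) : V :=
  ∑ a, R X Y Z (e a) • e a

/-- The curvature term `Ric_R(T)(X₁,…,X_k) = Σᵢ Σⱼ ((R(Xᵢ,eⱼ))T)(X₁,…,eⱼ,…,X_k)`. -/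
def ricTerm {n k : ℕ} (e : Fin n → V) (R : V → V → V → V → ℝ)
    (T : (Fin k → V) → ℝ) (X : Fin k → V) : ℝ :=
  ∑ i : Fin k, ∑ j : Fin n, tact (curvOp e R (X i) (e j)) T (Function.update X i (e j))

/-- The inner product of two `(0,k)`-tensors with respect to the orthonormal basis `e`. -/
def tinner {n k : ℕ} (e : Fin n → V) (S T : (Fin k → V) → ℝ) : ℝ :=
  ∑ I : Fin k → Fin n, S (fun m => e (I m)) * T (fun m => e (I m))

/-- The skew endomorphism `(A ∧ B)Z = g(A,Z)B − g(B,Z)A`. -/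
def wedgeOp (A B Z : V) : V := ⟪A, Z⟫ • B - ⟪B, Z⟫ • A

/-- Expansion of the `i`-th argument of a tensor in the orthonormal basis `e`. -/
theorem sum_inner_mul_update {n k : ℕ} (e : OrthonormalBasis (Fin n) ℝ V)
    (T : MultilinearMap ℝ (fun _ : Fin k => V) ℝ) (X : Fin k → V) (i : Fin k) (v : V) :
    ∑ a, ⟪e a, v⟫ * T (Function.update X i (e a)) = T (Function.update X i v) := by
  conv_rhs => rw [← e.sum_repr' v]
  rw [T.map_update_sum]
  simp only [T.map_update_smul, smul_eq_mul]

/-- The contribution of the slot `i` in which `e_a` has been inserted. -/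
theorem sum_wedge_diag {n k : ℕ} (e : OrthonormalBasis (Fin n) ℝ V)
    (T : MultilinearMap ℝ (fun _ : Fin k => V) ℝ) (X : Fin k → V) (i : Fin k) (A : V) :
    ∑ a, T (Function.update (Function.update X i (e a)) i
        (wedgeOp A (e a) (Function.update X i (e a) i))) =
      -(((n : ℝ) - 1) * T (Function.update X i A)) := by
  have hone : ∀ a, ⟪e a, e a⟫ = (1 : ℝ) := fun a => by simp
  simp only [wedgeOp, Function.update_self, Function.update_idem, T.map_update_sub,
    T.map_update_smul, smul_eq_mul, hone, one_mul, Finset.sum_sub_distrib]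
  have hcomm : ∀ a, ⟪A, e a⟫ = ⟪e a, A⟫ := fun a => real_inner_comm _ _
  simp only [hcomm, sum_inner_mul_update]
  simp only [Finset.sum_const, Finset.card_univ, Fintype.card_fin, nsmul_eq_mul]
  ring

/-- The contribution of a slot `j` other than the slot `i` in which `e_a` has been inserted. -/
theorem sum_wedge_offDiag {n k : ℕ} (e : OrthonormalBasis (Fin n) ℝ V)
    (T : MultilinearMap ℝ (fun _ : Fin k => V) ℝ) (X : Fin k → V) {i j : Fin k} (hij : i ≠ j)
    (A : V) :
    ∑ a, T (Function.update (Function.update X i (e a)) j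
        (wedgeOp A (e a) (Function.update X i (e a) j))) =
      ⟪A, X j⟫ * (∑ a, ∑ b, ⟪e a, e b⟫ *
          T (Function.update (Function.update X i (e a)) j (e b))) -
        T (Function.update (Function.update X i (X j)) j A) := by
  simp only [wedgeOp, Function.update_of_ne hij.symm, T.map_update_sub, T.map_update_smul,
    smul_eq_mul, Finset.sum_sub_distrib, ← Finset.mul_sum]
  congr 1
  · congr 1
    refine Finset.sum_congr rfl fun a _ => ?_
    simp [e.inner_eq_ite]
  · simp only [Function.update_comm hij]
    exact sum_inner_mul_update e T (Function.update X j A) i (X j)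

/-- the second half of the computation in the proof of Proposition 3.2. -/
theorem stmt2 {n k : ℕ} (e : OrthonormalBasis (Fin n) ℝ V)
    (H : V →ₗ[ℝ] V) (hHsym : ∀ X Y : V, ⟪H X, Y⟫ = ⟪X, H Y⟫)
    (h : V → V → ℝ) (hh : ∀ X Y : V, h X Y = ⟪H X, Y⟫)
    (T : MultilinearMap ℝ (fun _ : Fin k => V) ℝ) :
    ∀ X : Fin k → V,
      (∑ i : Fin k, ∑ a : Fin n,
          tact (wedgeOp (H (X i)) (e a)) ⇑T (Function.update X i (e a))) =
        (∑ i : Fin k, ∑ j : Fin k, if i = j then 0 else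
            T (Function.update (Function.update X i (X j)) j (H (X i))))
        - (∑ i : Fin k, ∑ j : Fin k, if i = j then 0 else
            h (X i) (X j) *
              ∑ a : Fin n, ∑ b : Fin n, ⟪e a, e b⟫ *
                T (Function.update (Function.update X i (e a)) j (e b)))
        - ((n : ℝ) - 1) * tact ⇑H ⇑T X := by
  intro X
  have slot : ∀ i : Fin k,
      ∑ a : Fin n, tact (wedgeOp (H (X i)) (e a)) ⇑T (Function.update X i (e a)) =
        ∑ j : Fin k, ((if i = j then 0 else
            T (Function.update (Function.update X i (X j)) j (H (X i))))
          - (if i = j then 0 else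
            h (X i) (X j) *
              ∑ a : Fin n, ∑ b : Fin n, ⟪e a, e b⟫ *
                T (Function.update (Function.update X i (e a)) j (e b)))
          + (if i = j then ((n : ℝ) - 1) * T (Function.update X i (H (X i))) else 0)) := by
    intro i
    simp only [tact, Finset.sum_neg_distrib]
    rw [Finset.sum_comm, ← Finset.sum_neg_distrib]
    refine Finset.sum_congr rfl fun j _ => ?_
    by_cases hij : i = j
    · subst hij
      rw [sum_wedge_diag]
      simp
    · rw [sum_wedge_offDiag e T X hij]
      simp only [hij, if_false, hh]
      ring
  rw [Finset.sum_congr rfl fun i _ => slot i]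
  simp only [Finset.sum_add_distrib, Finset.sum_sub_distrib, Finset.sum_ite_eq,
    Finset.mem_univ, if_true, tact, ← Finset.mul_sum]
  ring
end
end

section
/- Let h be a symmetric bilinear form on V with associated symmetric endomorphism H. Every symmetric (0,2)-tensor T on V satisfies Ric_{h⧆g}(T) = −n·HT − 2·⟨T,h⟩·g − 2·tr(T)·h + 2·tr(h)·T, where (HT)(X,Y) = −T(H(X),Y) − T(X,H(Y)), ⟨T,h⟩ = Σ_{a,b} T(e_a,e_b)h(e_a,e_b), and tr(T) = Σ_a T(e_a,e_a). -/
/-!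
With `R = h ⧆ g` the curvature endomorphism is
`R(X,Y)Z = h(X,Z) Y − g(Y,Z) HX + g(X,Z) HY − h(Y,Z) X` (`curvOp_knProd`).
Each slot of `Ric_R(T)` therefore splits into two contractions over the basis: the one where
`R(X,eⱼ)` hits `eⱼ` gives `(n − 2) T(HX,Y) + tr(h) T(X,Y)`, and the one where it hits the other
argument gives `T(HX,Y) + T(X,HY) − tr(T) h(X,Y) − ⟨T,h⟩ g(X,Y)` (`sum_slot`). By the symmetry of
`T` the two slots have the same shape, and adding them yields the formula, the terms
`T(HX,Y) + T(X,HY)` occurring `(n − 2) + 2 = n` times.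
-/

open scoped RealInnerProductSpace BigOperators
open Finset

noncomputable section

variable {V : Type*} [NormedAddCommGroup V] [InnerProductSpace ℝ V]

lemma update_pair_zero (X Y Z : V) : Function.update ![X, Y] 0 Z = ![Z, Y] := by
  ext i
  fin_cases i <;> simp

lemma update_pair_one (X Y Z : V) : Function.update ![X, Y] 1 Z = ![X, Z] := by
  ext i
  fin_cases i <;> simp

/-- A `(0,2)`-tensor, given as a multilinear map on `Fin 2`, as a curried bilinear map. -/
def bilinOf (T : MultilinearMap ℝ (fun _ : Fin 2 => V) ℝ) : V →ₗ[ℝ] V →ₗ[ℝ] ℝ :=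
  LinearMap.mk₂ ℝ (fun X Y => T ![X, Y])
    (fun X X₂ Y => by simpa only [update_pair_zero] using T.map_update_add ![X, Y] 0 X X₂)
    (fun c X Y => by simpa only [update_pair_zero] using T.map_update_smul ![X, Y] 0 c X)
    (fun X Y Y₂ => by simpa only [update_pair_one] using T.map_update_add ![X, Y] 1 Y Y₂)
    (fun c X Y => by simpa only [update_pair_one] using T.map_update_smul ![X, Y] 1 c Y)

lemma bilinOf_apply (T : MultilinearMap ℝ (fun _ : Fin 2 => V) ℝ) (X Y : V) :
    bilinOf T X Y = T ![X, Y] := rfl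

lemma tact_two (L : V → V) (T : (Fin 2 → V) → ℝ) (X Y : V) :
    tact L T ![X, Y] = -(T ![L X, Y] + T ![X, L Y]) := by
  simp [tact, Fin.sum_univ_two, update_pair_zero, update_pair_one]

lemma curvOp_knProd {n : ℕ} (e : OrthonormalBasis (Fin n) ℝ V) (H : V →ₗ[ℝ] V)
    (h : V → V → ℝ) (hh : ∀ X Y : V, h X Y = ⟪H X, Y⟫) (X Y Z : V) :
    curvOp e (knProd h gf) X Y Z
      = h X Z • Y - ⟪Y, Z⟫ • H X + ⟪X, Z⟫ • H Y - h Y Z • X := by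
  have expand : ∀ W : V, ∑ a, ⟪W, e a⟫ • e a = W := fun W => by
    simpa only [real_inner_comm] using e.sum_repr' W
  have rhs : h X Z • Y - ⟪Y, Z⟫ • H X + ⟪X, Z⟫ • H Y - h Y Z • X
      = h X Z • (∑ a, ⟪Y, e a⟫ • e a) - ⟪Y, Z⟫ • (∑ a, ⟪H X, e a⟫ • e a)
        + ⟪X, Z⟫ • (∑ a, ⟪H Y, e a⟫ • e a) - h Y Z • (∑ a, ⟪X, e a⟫ • e a) := by
    simp only [expand]
  rw [rhs]
  simp only [curvOp, knProd, gf, hh, smul_sum, ← sum_add_distrib, ← sum_sub_distrib]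
  refine sum_congr rfl fun a _ => ?_
  module

/-- The contribution of a single slot to the curvature term of `h ⧆ g`. -/
lemma sum_slot {n : ℕ} (e : OrthonormalBasis (Fin n) ℝ V) (H : V →ₗ[ℝ] V)
    (hHsym : ∀ X Y : V, ⟪H X, Y⟫ = ⟪X, H Y⟫)
    (h : V → V → ℝ) (hh : ∀ X Y : V, h X Y = ⟪H X, Y⟫)
    (B : V →ₗ[ℝ] V →ₗ[ℝ] ℝ) (hB : ∀ X Y, B X Y = B Y X) (X Y : V) :
    ∑ j, -(B (curvOp e (knProd h gf) X (e j) (e j)) Y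
          + B (e j) (curvOp e (knProd h gf) X (e j) Y))
      = ((n : ℝ) - 1) * B (H X) Y + B X (H Y)
        - (∑ a, ∑ b, B (e a) (e b) * h (e a) (e b)) * ⟪X, Y⟫
        - (∑ a, B (e a) (e a)) * h X Y + (∑ a, h (e a) (e a)) * B X Y := by
  have expand : ∀ W : V, ∑ a, ⟪W, e a⟫ • e a = W := fun W => by
    simpa only [real_inner_comm] using e.sum_repr' W
  -- Contracting a linear functional against the coordinates of `W` evaluates it at `W`.
  have contract : ∀ (f : V →ₗ[ℝ] ℝ) (W : V), ∑ j, ⟪W, e j⟫ * f (e j) = f W := fun f W => by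
    conv_rhs => rw [← expand W]
    simp
  have h1 : ∑ j, h X (e j) * B (e j) Y = B (H X) Y := by
    simpa [hh] using contract (B.flip Y) (H X)
  have h2 : ∑ j, ⟪X, e j⟫ * B (H (e j)) Y = B (H X) Y := by
    simpa using contract (B.flip Y ∘ₗ H) X
  have h3 : ∑ j, ⟪e j, Y⟫ * B (e j) (H X) = B (H X) Y := by
    rw [hB (H X) Y]
    simpa [real_inner_comm] using contract (B.flip (H X)) Y
  have h4 : ∑ j, h (e j) Y * B (e j) X = B X (H Y) := by
    rw [hB X (H Y)]
    simpa [hh, hHsym, real_inner_comm] using contract (B.flip X) (H Y)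
  have h5 : ∀ j, B (e j) (H (e j)) = ∑ b, B (e j) (e b) * h (e j) (e b) := fun j => by
    rw [← contract (B (e j)) (H (e j))]
    exact sum_congr rfl fun b _ => by rw [hh, mul_comm]
  have h6 : ∀ j, ⟪e j, e j⟫ = (1 : ℝ) := fun j => by simp
  have key : ∀ j, -(B (curvOp e (knProd h gf) X (e j) (e j)) Y
          + B (e j) (curvOp e (knProd h gf) X (e j) Y))
      = -(h X (e j) * B (e j) Y) + B (H X) Y - ⟪X, e j⟫ * B (H (e j)) Y
        + h (e j) (e j) * B X Y - B (e j) (e j) * h X Y + ⟪e j, Y⟫ * B (e j) (H X)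
        - (∑ b, B (e j) (e b) * h (e j) (e b)) * ⟪X, Y⟫ + h (e j) Y * B (e j) X := fun j => by
    rw [curvOp_knProd e H h hh, curvOp_knProd e H h hh, h6, ← h5]
    simp only [map_add, map_sub, map_smul, LinearMap.add_apply, LinearMap.sub_apply,
      LinearMap.smul_apply, smul_eq_mul]
    ring
  simp only [key, sum_add_distrib, sum_sub_distrib, sum_neg_distrib, ← sum_mul, h1, h2, h3, h4]
  simp only [sum_const, card_univ, Fintype.card_fin, nsmul_eq_mul]
  ring

/-- Proposition 3.3(1), first identity: the weighted curvature term on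
symmetric (0,2)-tensors. -/
theorem stmt3 {n : ℕ} (e : OrthonormalBasis (Fin n) ℝ V)
    (H : V →ₗ[ℝ] V) (hHsym : ∀ X Y : V, ⟪H X, Y⟫ = ⟪X, H Y⟫)
    (h : V → V → ℝ) (hh : ∀ X Y : V, h X Y = ⟪H X, Y⟫)
    (T : MultilinearMap ℝ (fun _ : Fin 2 => V) ℝ)
    (hTsym : ∀ X Y : V, T ![X, Y] = T ![Y, X]) :
    ∀ X Y : V,
      ricTerm ⇑e (knProd h gf) ⇑T ![X, Y] =
        -(n : ℝ) * tact ⇑H ⇑T ![X, Y]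
        - 2 * (∑ a : Fin n, ∑ b : Fin n, T ![e a, e b] * h (e a) (e b)) * ⟪X, Y⟫
        - 2 * (∑ a : Fin n, T ![e a, e a]) * h X Y
        + 2 * (∑ a : Fin n, h (e a) (e a)) * T ![X, Y] := by
  intro X Y
  have hB : ∀ X Y, bilinOf T X Y = bilinOf T Y X := hTsym
  have slot := sum_slot e H hHsym h hh (bilinOf T) hB
  have hsym : h Y X = h X Y := by rw [hh, hh, hHsym, real_inner_comm]
  have first := slot X Y
  have second := slot Y X
  simp only [ricTerm, Fin.sum_univ_two, update_pair_zero, update_pair_one, tact_two, Matrix.cons_val_zero,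
    Matrix.cons_val_one, ← bilinOf_apply]
  -- By symmetry of `T` the second slot is the first one with `X` and `Y` exchanged.
  have swap : ∀ j, -(bilinOf T (curvOp e (knProd h gf) Y (e j) X) (e j)
        + bilinOf T X (curvOp e (knProd h gf) Y (e j) (e j)))
      = -(bilinOf T (curvOp e (knProd h gf) Y (e j) (e j)) X
        + bilinOf T (e j) (curvOp e (knProd h gf) Y (e j) X)) := fun j => by
    rw [hB _ (e j), hB X, add_comm]
  simp only [swap]
  rw [first, second, hsym, real_inner_comm X Y, hB Y X, hB Y (H X), hB (H Y) X]
  ring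
end
end
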